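/- Let G be a bipartite graph with bipartite independence number β = β(G), M a perfect matching of G, and C an M-alternating cycle. Let P ⊆ C be a blue M-alternating path of length at least 6(2β+2)², starting with a non-matching edge and not containing any 0-biskip. Then there exist two edges e1 = (b1,b2) and e2 = (w1,w2) of G with all four endpoints on P, at least one of which is red, such that C' := e1 ∪ e2 ∪ C[b1,w2] ∪ C[w1,b2] is an M-alternating cycle with 0 < w_M(C') ≤ 2 whose number of red edges equals w_M(C'). Symmetrically, if P is a red M-alternating path with the same hypotheses, then there exist such edges e1, e2, at least one of them blue, with C' an M-alternating cycle satisfying −2 ≤ w_M(C') < 0 whose number of blue edges equals |w_M(C')|. -/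

import Mathlib

open Finset

/-- `M` is (the edge set of) a perfect matching of `G`: all its edges are edges of `G` and
every vertex belongs to exactly one edge of `M`. -/
def IsPM {V : Type*} [DecidableEq V] (G : SimpleGraph V) (M : Finset (Sym2 V)) : Prop :=
  ↑M ⊆ G.edgeSet ∧ ∀ v : V, ∃! e, e ∈ M ∧ v ∈ e

/-- Number of red edges in the edge set `F` (the coloring `red` marks the red edges). -/
def redCount {V : Type*} [DecidableEq V] (red : Sym2 V → Bool) (F : Finset (Sym2 V)) : ℕ :=
  (F.filter fun e => red e = true).card

/-- Number of blue edges in the edge set `F`. -/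
def blueCount {V : Type*} [DecidableEq V] (red : Sym2 V → Bool) (F : Finset (Sym2 V)) : ℕ :=
  (F.filter fun e => red e = false).card

/-- The weight `w_M(e)`: 0 for blue edges, +1 for red non-matching edges, −1 for red
matching edges. -/
def wt {V : Type*} [DecidableEq V] (red : Sym2 V → Bool) (M : Finset (Sym2 V))
    (e : Sym2 V) : ℤ :=
  if red e then (if e ∈ M then -1 else 1) else 0

/-- `w_M(F)`, the total weight of an edge set `F`. -/
def wSum {V : Type*} [DecidableEq V] (red : Sym2 V → Bool) (M F : Finset (Sym2 V)) : ℤ :=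
  ∑ e ∈ F, wt red M e

/-- A list of edges alternates with respect to the matching `M`: consecutive edges are
alternately in and out of `M`. -/
def altList {V : Type*} [DecidableEq V] (M : Finset (Sym2 V)) (l : List (Sym2 V)) : Prop :=
  l.Chain' fun e f => ¬((e ∈ M) ↔ (f ∈ M))

/-- `C` is (the edge set of) an `M`-alternating cycle in `G`: it is traced by a cycle walk
whose edges alternate (cyclically) between `M` and non-`M` edges. -/
def IsAltCycle {V : Type*} [DecidableEq V] (G : SimpleGraph V)
    (M C : Finset (Sym2 V)) : Prop :=
  ∃ (v : V) (p : G.Walk v v), p.IsCycle ∧ p.edges.toFinset = C ∧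
    altList M (p.edges ++ p.edges.take 1)

/-- `P` is (the edge set of) an `M`-alternating path in `G`. -/
def IsAltPath {V : Type*} [DecidableEq V] (G : SimpleGraph V)
    (M P : Finset (Sym2 V)) : Prop :=
  ∃ (u v : V) (p : G.Walk u v), p.IsPath ∧ p.edges.toFinset = P ∧ altList M p.edges

/-- The symmetric difference of two edge sets. -/
def sd {V : Type*} [DecidableEq V] (M M' : Finset (Sym2 V)) : Finset (Sym2 V) :=
  (M \ M') ∪ (M' \ M)

/-- The set of vertices covered by an edge set. -/
def edgeVerts {V : Type*} (F : Finset (Sym2 V)) : Set V := {v | ∃ e ∈ F, v ∈ e}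

/-- `𝒞` is a set of pairwise vertex-disjoint `M`-alternating cycles of `G`. -/
def IsAltCycleSet {V : Type*} [DecidableEq V] (G : SimpleGraph V) (M : Finset (Sym2 V))
    (𝒞 : Finset (Finset (Sym2 V))) : Prop :=
  (∀ C ∈ 𝒞, IsAltCycle G M C) ∧
    (𝒞 : Set (Finset (Sym2 V))).Pairwise fun C C' => Disjoint (edgeVerts C) (edgeVerts C')

/-- The bipartite independence number `β(G)` with respect to the bipartition given by
`side`: the largest `b` such that `G` contains a balanced independent set with `b` vertices
on each side. -/
noncomputable def bipIndepNum {V : Type*} [DecidableEq V] (G : SimpleGraph V)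
    (side : V → Bool) : ℕ :=
  sSup {b | ∃ s : Finset V, (s : Set V).Pairwise (fun x y => ¬ G.Adj x y) ∧
    (s.filter fun w => side w = true).card = b ∧
    (s.filter fun w => side w = false).card = b}

/-- A biskip on the `M`-alternating cycle `C`: chords `e1` (and possibly `e2`) of `C` which
close up stretches of `C` into vertex-disjoint `M`-alternating cycles `C1` and `C2`
(`C2 = ∅` in the single-edge case) of strictly smaller total size, the total weight change
`w(C1) + w(C2) − w(C)` being at most 4 in absolute value. -/
def IsBiskip {V : Type*} [DecidableEq V] (G : SimpleGraph V) (red : Sym2 V → Bool)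
    (M C : Finset (Sym2 V)) (e1 e2 : Sym2 V) (C1 C2 : Finset (Sym2 V)) : Prop :=
  e1 ∈ G.edgeSet ∧ e1 ∉ C ∧ IsAltCycle G M C1 ∧ e1 ∈ C1 ∧ C1 \ {e1} ⊆ C ∧
  (C2 = ∅ ∨ (e2 ∈ G.edgeSet ∧ e2 ∉ C ∧ IsAltCycle G M C2 ∧ e2 ∈ C2 ∧ C2 \ {e2} ⊆ C)) ∧
  Disjoint (edgeVerts C1) (edgeVerts C2) ∧
  C1.card + C2.card < C.card ∧
  |wSum red M C1 + wSum red M C2 - wSum red M C| ≤ 4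

/-!
A path with at least `8 * (β + 1) - 2` edges is already long enough. Write `p₀ p₁ …` for its
vertices. If the path is blue, a chord `pᵢ pⱼ` with `i` even, `j` odd and `i + 1 < j` replaces an
all-blue part of `C`, so it would be a 0-biskip if it were blue too; hence it is red. A chord
`pₗ pₖ` around it, with `k` odd, `l` even and `k < i < j < l`, closes up with `pᵢ pⱼ` and the two
segments from `pₖ` to `pᵢ` and from `pⱼ` to `pₗ` to an alternating cycle, on which only the two
chords can be red. Both chords are non-matching, so the weight of this cycle counts its red edges,
of which there are one or two. Applying `β < β + 1` to blocks of `β + 1` vertices of the path of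
the right parity produces both chords.

A red path reduces to a blue one by exchanging the colours: an alternating cycle has as many
matching as non-matching edges, so the exchange changes the sign of its weight.
-/

section AlternatingLists

variable {V : Type*} {M : Finset (Sym2 V)} {l l₁ l₂ : List (Sym2 V)} {e : Sym2 V}

/-- The edge list of an alternating path whose first and last edges are matching edges, encoded by
positions: matching edges sit at the even positions, and the number of edges is odd. -/
structure IsMatchingEnded (M : Finset (Sym2 V)) (l : List (Sym2 V)) : Prop where
  odd_length : Odd l.length
  getElem_mem_iff : ∀ i (hi : i < l.length), l[i] ∈ M ↔ Even i

theorem IsMatchingEnded.append_cons (h₁ : IsMatchingEnded M l₁) (h₂ : IsMatchingEnded M l₂)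
    (he : e ∉ M) : IsMatchingEnded M (l₁ ++ e :: l₂) where
  odd_length := by
    have := h₁.odd_length
    have := h₂.odd_length
    grind
  getElem_mem_iff i hi := by
    have := h₁.odd_length
    have := h₁.getElem_mem_iff
    have := h₂.getElem_mem_iff
    grind

variable [DecidableEq V]

theorem altList_iff_isChain : altList M l ↔ l.IsChain fun e f ↦ ¬(e ∈ M ↔ f ∈ M) :=
  Iff.rfl

theorem altList.getElem_mem_iff_odd (hl : altList M l) (hhead : ∀ e, l.head? = some e → e ∉ M)
    (i : ℕ) (hi : i < l.length) : l[i] ∈ M ↔ Odd i := by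
  induction i with
  | zero => simpa using hhead l[0] (by simp [List.head?_eq_getElem?, hi])
  | succ i ih =>
    have hstep := List.IsChain.getElem hl i hi
    grind

theorem altList_cyclic_iff :
    altList M (l ++ l.take 1) ↔ Cycle.Chain (fun e f ↦ ¬(e ∈ M ↔ f ∈ M)) (l : Cycle (Sym2 V)) := by
  cases l with
  | nil => simp [altList_iff_isChain]
  | cons e l => simp [altList_iff_isChain, Cycle.chain_coe_cons]

theorem altList_cyclic_of_isRotated (h : l₁ ~r l₂) (h₁ : altList M (l₁ ++ l₁.take 1)) :
    altList M (l₂ ++ l₂.take 1) := by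
  rw [altList_cyclic_iff] at h₁ ⊢
  rwa [← Cycle.coe_eq_coe.2 h]

theorem altList_cyclic_reverse (hl : altList M (l ++ l.take 1)) :
    altList M (l.reverse ++ l.reverse.take 1) := by
  cases l with
  | nil => simpa using hl
  | cons e l =>
    have hrev : altList M (e :: l.reverse ++ (e :: l.reverse).take 1) := by
      rw [altList_iff_isChain] at hl ⊢
      simpa [iff_comm] using List.isChain_reverse.2 hl
    exact altList_cyclic_of_isRotated ⟨1, by simp⟩ hrev

theorem IsMatchingEnded.altList_cons_cyclic (hl : IsMatchingEnded M l) (he : e ∉ M) :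
    altList M (e :: l ++ (e :: l).take 1) := by
  have := hl.odd_length
  have := hl.getElem_mem_iff
  rw [altList_iff_isChain, List.isChain_iff_getElem]
  grind

theorem IsMatchingEnded.of_altList_append (hl : altList M (l₁ ++ l₂ ++ (l₁ ++ l₂).take 1))
    (h₁ : Odd l₁.length) (hhead : ∀ e, l₁.head? = some e → e ∉ M) :
    IsMatchingEnded M l₂ := by
  have hpos := h₁.pos
  have htake : (l₁ ++ l₂).take 1 = [l₁[0]] := by
    cases l₁ <;> simp_all
  rw [htake, List.append_assoc] at hl
  have hmem (i : ℕ) (hi : i < (l₂ ++ [l₁[0]]).length) : (l₂ ++ [l₁[0]])[i] ∈ M ↔ Even i := by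
    have := hl.getElem_mem_iff_odd (by rwa [List.head?_append_of_ne_nil _ (by grind)])
      (l₁.length + i) (by grind)
    grind
  have hhead₁ : l₁[0] ∉ M := hhead _ (by simp [List.head?_eq_getElem?, hpos])
  constructor
  · have := hmem l₂.length
    grind
  · intro i hi
    have := hmem i
    grind

end AlternatingLists

section Weights

variable {V : Type*} [DecidableEq V] {G : SimpleGraph V} {M C : Finset (Sym2 V)}
  {red : Sym2 V → Bool}

theorem sum_append_take_one_eq_zero {l : List ℤ}
    (hl : (l ++ l.take 1).IsChain fun x y ↦ x + y = 0) : l.sum = 0 := by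
  cases l with
  | nil => rfl
  | cons a l =>
    have telescope (l : List ℤ) (a b : ℤ) (h : (a :: l ++ [b]).IsChain fun x y ↦ x + y = 0) :
        (a :: l).sum + (l ++ [b]).sum = 0 := by
      induction l generalizing a with
      | nil => simpa using h
      | cons c l ih => grind
    have := telescope l a a (by simpa using hl)
    grind

theorem wSum_toFinset {l : List (Sym2 V)} (hl : l.Nodup) :
    wSum red M l.toFinset = (l.map (wt red M)).sum :=
  List.sum_toFinset _ hl

/-- Matching and non-matching edges are equinumerous on an alternating cycle. -/
theorem IsAltCycle.wSum_not (hC : IsAltCycle G M C) :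
    wSum (fun e ↦ !red e) M C = -wSum red M C := by
  obtain ⟨v, c, hc, rfl, halt⟩ := hC
  have hsign (e : Sym2 V) : wt (fun e ↦ !red e) M e + wt red M e = if e ∈ M then -1 else 1 := by
    unfold wt; grind
  have hsum : (c.edges.map fun e ↦ if e ∈ M then (-1 : ℤ) else 1).sum = 0 := by
    refine sum_append_take_one_eq_zero ?_
    rw [← List.map_take, ← List.map_append, List.isChain_map]
    exact halt.imp fun e f hef ↦ by grind
  rw [eq_neg_iff_add_eq_zero, wSum_toFinset hc.edges_nodup, wSum_toFinset hc.edges_nodup,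
    ← List.sum_map_add]
  simpa only [hsign] using hsum

theorem redCount_not (F : Finset (Sym2 V)) : redCount (fun e ↦ !red e) F = blueCount red F := by
  simp [redCount, blueCount]

theorem redCount_pos {e : Sym2 V} {F : Finset (Sym2 V)} (he : e ∈ F) (hred : red e = true) :
    0 < redCount red F :=
  card_pos.2 ⟨e, mem_filter.2 ⟨he, hred⟩⟩

theorem redCount_insert_insert_le_two {F : Finset (Sym2 V)} (hF : ∀ e ∈ F, red e = false)
    (e₁ e₂ : Sym2 V) : redCount red (insert e₁ (insert e₂ F)) ≤ 2 :=
  (card_le_card fun e he ↦ by grind).trans (card_le_two (a := e₁) (b := e₂))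

theorem redCount_eq_wSum {F : Finset (Sym2 V)} (hF : ∀ e ∈ F, red e = true → e ∉ M) :
    (redCount red F : ℤ) = wSum red M F := by
  rw [redCount, wSum, Finset.card_filter]
  push_cast
  exact Finset.sum_congr rfl fun e he ↦ by grind [wt]

end Weights

section Outcomes

variable {V : Type*} [DecidableEq V] {G : SimpleGraph V} {red : Sym2 V → Bool}
  {M C P : Finset (Sym2 V)} {l : List (Sym2 V)}

/-- A 0-biskip given by the single edge `e`: a chord `e` of `C` which closes up a part of `C` into
an `M`-alternating cycle `C₁` of the same weight, such that the part of `C` skipped lies in `P`. -/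
def HasZeroSkip (G : SimpleGraph V) (red : Sym2 V → Bool) (M C P : Finset (Sym2 V)) : Prop :=
  ∃ (e : Sym2 V) (C₁ : Finset (Sym2 V)), e ∈ G.edgeSet ∧ e ∉ C ∧ IsAltCycle G M C₁ ∧ e ∈ C₁ ∧
    C₁ \ {e} ⊆ C ∧ C₁.card < C.card ∧ wSum red M C₁ = wSum red M C ∧ C \ C₁ ⊆ P

/-- The conclusion for a blue path with edge list `l`: two chords with all endpoints on the path, at
least one of them red, close up parts of `C` into an alternating cycle of weight `1` or `2` with as
many red edges. -/
def HasSmallRedCycle (G : SimpleGraph V) (red : Sym2 V → Bool) (M C : Finset (Sym2 V))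
    (l : List (Sym2 V)) : Prop :=
  ∃ (e1 e2 : Sym2 V) (C' : Finset (Sym2 V)),
    e1 ∈ G.edgeSet ∧ e2 ∈ G.edgeSet ∧ e1 ≠ e2 ∧
    (∀ a : V, a ∈ e1 → ∃ f ∈ l, a ∈ f) ∧
    (∀ a : V, a ∈ e2 → ∃ f ∈ l, a ∈ f) ∧
    (red e1 = true ∨ red e2 = true) ∧
    IsAltCycle G M C' ∧ e1 ∈ C' ∧ e2 ∈ C' ∧ C' \ {e1, e2} ⊆ C ∧
    0 < wSum red M C' ∧ wSum red M C' ≤ 2 ∧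
    (redCount red C' : ℤ) = wSum red M C'

/-- The conclusion for a red path with edge list `l`: two chords with all endpoints on the path, at
least one of them blue, close up parts of `C` into an alternating cycle of weight `-1` or `-2` with
as many blue edges. -/
def HasSmallBlueCycle (G : SimpleGraph V) (red : Sym2 V → Bool) (M C : Finset (Sym2 V))
    (l : List (Sym2 V)) : Prop :=
  ∃ (e1 e2 : Sym2 V) (C' : Finset (Sym2 V)),
    e1 ∈ G.edgeSet ∧ e2 ∈ G.edgeSet ∧ e1 ≠ e2 ∧
    (∀ a : V, a ∈ e1 → ∃ f ∈ l, a ∈ f) ∧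
    (∀ a : V, a ∈ e2 → ∃ f ∈ l, a ∈ f) ∧
    (red e1 = false ∨ red e2 = false) ∧
    IsAltCycle G M C' ∧ e1 ∈ C' ∧ e2 ∈ C' ∧ C' \ {e1, e2} ⊆ C ∧
    -2 ≤ wSum red M C' ∧ wSum red M C' < 0 ∧
    (blueCount red C' : ℤ) = |wSum red M C'|

theorem HasZeroSkip.exists_isBiskip (h : HasZeroSkip G red M C P) :
    ∃ (e1 e2 : Sym2 V) (C1 C2 : Finset (Sym2 V)), IsBiskip G red M C e1 e2 C1 C2 ∧
      wSum red M C1 + wSum red M C2 - wSum red M C = 0 ∧ C \ (C1 ∪ C2) ⊆ P := by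
  obtain ⟨e, C₁, heG, heC, hC₁, heC₁, hsub, hcard, hw, hP⟩ := h
  have hw_empty : wSum red M ∅ = 0 := Finset.sum_empty
  refine ⟨e, e, C₁, ∅, ⟨heG, heC, hC₁, heC₁, hsub, Or.inl rfl, ?_, ?_, ?_⟩, ?_, ?_⟩
  · simp [edgeVerts]
  · simpa using hcard
  · simp [hw, hw_empty]
  · simp [hw, hw_empty]
  · simpa using hP

theorem HasZeroSkip.mono {P' : Finset (Sym2 V)} (hP : P ⊆ P') (h : HasZeroSkip G red M C P) :
    HasZeroSkip G red M C P' := by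
  obtain ⟨e, C₁, heG, heC, hC₁, heC₁, hsub, hcard, hw, hP₁⟩ := h
  exact ⟨e, C₁, heG, heC, hC₁, heC₁, hsub, hcard, hw, hP₁.trans hP⟩

theorem HasZeroSkip.of_red_not (h : HasZeroSkip G (fun e ↦ !red e) M C P) (hC : IsAltCycle G M C) :
    HasZeroSkip G red M C P := by
  obtain ⟨e, C₁, heG, heC, hC₁, heC₁, hsub, hcard, hw, hP⟩ := h
  rw [hC₁.wSum_not, hC.wSum_not, neg_inj] at hw
  exact ⟨e, C₁, heG, heC, hC₁, heC₁, hsub, hcard, hw, hP⟩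

theorem HasSmallRedCycle.hasSmallBlueCycle (h : HasSmallRedCycle G (fun e ↦ !red e) M C l) :
    HasSmallBlueCycle G red M C l := by
  obtain ⟨e₁, e₂, C', he₁, he₂, hne, h₁, h₂, hcol, hC', hm₁, hm₂, hsub, hpos, hle, hcount⟩ := h
  rw [hC'.wSum_not] at hpos hle hcount
  rw [redCount_not] at hcount
  refine ⟨e₁, e₂, C', he₁, he₂, hne, h₁, h₂, by simpa using hcol, hC', hm₁, hm₂, hsub,
    neg_le.1 hle, neg_pos.1 hpos, ?_⟩
  rw [hcount, abs_of_neg (neg_pos.1 hpos)]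

end Outcomes

section Walks

open SimpleGraph

variable {V : Type*} {G : SimpleGraph V} {a b x y : V}

theorem edges_subset_of_cons_subset_cons {h h' : G.Adj a b} {s : G.Walk b x} {r : G.Walk b y}
    (hs : (Walk.cons h s).IsTrail) (hsub : (Walk.cons h s).edges ⊆ (Walk.cons h' r).edges) :
    s.edges ⊆ r.edges := by
  intro e he
  refine (List.mem_cons.1 (hsub (List.mem_cons_of_mem _ he))).resolve_left ?_
  rintro rfl
  exact ((Walk.isTrail_cons h s).1 hs).2 he

theorem isPath_exists_eq_append {r : G.Walk a y} {s : G.Walk a b} (hr : r.IsPath) (hs : s.IsTrail)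
    (hsub : s.edges ⊆ r.edges) : ∃ r' : G.Walk b y, r = s.append r' := by
  induction s with
  | nil => exact ⟨r, rfl⟩
  | cons h s ih =>
    have hsnd := hr.eq_snd_of_mem_edges (hsub List.mem_cons_self)
    cases r with
    | nil => simp at hsub
    | cons h' r =>
      rw [Walk.snd_cons] at hsnd
      subst hsnd
      obtain ⟨r', rfl⟩ := ih hr.of_cons hs.of_cons (edges_subset_of_cons_subset_cons hs hsub)
      exact ⟨r', rfl⟩

theorem isCycle_exists_eq_append_of_snd_eq {c : G.Walk a a} {s : G.Walk a b} (hc : c.IsCycle)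
    (hs : s.IsTrail) (hnil : ¬s.Nil) (hsub : s.edges ⊆ c.edges) (hsnd : s.snd = c.snd) :
    ∃ r : G.Walk b a, c = s.append r := by
  cases s with
  | nil => simp at hnil
  | cons h s =>
    cases c with
    | nil => simp at hc
    | cons h' c =>
      rw [Walk.snd_cons, Walk.snd_cons] at hsnd
      subst hsnd
      obtain ⟨r, rfl⟩ := isPath_exists_eq_append ((Walk.cons_isCycle_iff c h').1 hc).1 hs.of_cons
        (edges_subset_of_cons_subset_cons hs hsub)
      exact ⟨r, rfl⟩

theorem isCycle_eq_snd_or_eq_penultimate {c : G.Walk a a} (hc : c.IsCycle)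
    (hx : s(a, x) ∈ c.edges) : x = c.snd ∨ x = c.penultimate := by
  cases c with
  | nil => simp at hx
  | cons h c =>
    have hpath := ((Walk.cons_isCycle_iff c h).1 hc).1
    rw [Walk.edges_cons, List.mem_cons, Sym2.congr_right] at hx
    refine hx.imp (by simp) fun hx ↦ ?_
    rw [hpath.eq_penultimate_of_mem_edges hx,
      Walk.penultimate_cons_of_not_nil _ _ (by rintro hnil; simp [Walk.edges_eq_nil.2 hnil] at hx)]

/-- An `M`-alternating cycle with edge set `C` together with a closed walk `c` tracing it, so that
one may choose the base point and the orientation. -/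
structure TracesAltCycle [DecidableEq V] (M C : Finset (Sym2 V)) (c : G.Walk a a) : Prop where
  isCycle : c.IsCycle
  toFinset_edges : c.edges.toFinset = C
  altList_edges : altList M (c.edges ++ c.edges.take 1)

variable [DecidableEq V] {M C : Finset (Sym2 V)}

theorem TracesAltCycle.reverse {c : G.Walk a a} (hc : TracesAltCycle M C c) :
    TracesAltCycle M C c.reverse where
  isCycle := hc.isCycle.reverse
  toFinset_edges := by simp [hc.toFinset_edges]
  altList_edges := by simpa using altList_cyclic_reverse hc.altList_edges

theorem TracesAltCycle.rotate {c : G.Walk a a} (hc : TracesAltCycle M C c) (hx : x ∈ c.support) :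
    TracesAltCycle M C (c.rotate x hx) where
  isCycle := hc.isCycle.rotate hx
  toFinset_edges := by
    rw [← hc.toFinset_edges]
    exact List.toFinset_eq_of_perm _ _ (c.rotate_edges x hx).perm
  altList_edges := altList_cyclic_of_isRotated (c.rotate_edges x hx).symm hc.altList_edges

theorem IsAltCycle.exists_tracesAltCycle_append (hC : IsAltCycle G M C) {s : G.Walk a b}
    (hs : s.IsTrail) (hnil : ¬s.Nil) (hsub : s.edges.toFinset ⊆ C) :
    ∃ r : G.Walk b a, TracesAltCycle M C (s.append r) := by
  obtain ⟨v, c₀, hcyc, hedges, halt⟩ := hC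
  have hc₀ : TracesAltCycle M C c₀ := ⟨hcyc, hedges, halt⟩
  have mem_edges {x : V} {c : G.Walk x x} (hc : TracesAltCycle M C c) : s.edges ⊆ c.edges := by
    intro e he
    rw [← List.mem_toFinset, hc.toFinset_edges]
    exact hsub (List.mem_toFinset.2 he)
  have hfirst := Walk.mk_start_snd_mem_edges hnil
  have hc := hc₀.rotate (c₀.fst_mem_support_of_mem_edges (mem_edges hc₀ hfirst))
  rcases isCycle_eq_snd_or_eq_penultimate hc.isCycle (mem_edges hc hfirst) with hsnd | hsnd
  · obtain ⟨r, hr⟩ := isCycle_exists_eq_append_of_snd_eq hc.isCycle hs hnil (mem_edges hc) hsnd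
    exact ⟨r, hr ▸ hc⟩
  · rw [← Walk.snd_reverse] at hsnd
    obtain ⟨r, hr⟩ := isCycle_exists_eq_append_of_snd_eq hc.reverse.isCycle hs hnil
      (mem_edges hc.reverse) hsnd
    exact ⟨r, hr ▸ hc.reverse⟩

end Walks

section Closing

open SimpleGraph

variable {V : Type*} {G : SimpleGraph V} {a b c d : V} {M : Finset (Sym2 V)}

theorem isPath_append_cons {r₁ : G.Walk a b} {r₂ : G.Walk c d} (h₁ : r₁.IsPath) (h₂ : r₂.IsPath)
    (hdisj : r₁.support.Disjoint r₂.support) (h : G.Adj b c) :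
    (r₁.append (Walk.cons h r₂)).IsPath := by
  refine Walk.IsPath.mk' ?_
  rw [Walk.support_append, Walk.support_cons, List.tail_cons]
  exact h₁.support_nodup.append h₂.support_nodup hdisj

theorem IsMatchingEnded.notMem_edges {r : G.Walk b a} (hM : IsMatchingEnded M r.edges)
    (hr : r.IsPath) (he : s(a, b) ∉ M) : s(a, b) ∉ r.edges := by
  intro hmem
  rw [Sym2.eq_swap] at hmem he
  have hedges : r.edges = [s(b, a)] := congrArg Walk.edges (hr.eq_adj_toWalk_of_mem_edges hmem)
  rw [hedges] at hM
  exact he ((hM.getElem_mem_iff 0 (by simp)).2 Even.zero)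

variable [DecidableEq V] {red : Sym2 V → Bool} {C : Finset (Sym2 V)}

theorem IsMatchingEnded.isAltCycle_insert {r : G.Walk b a} (hM : IsMatchingEnded M r.edges)
    (hr : r.IsPath) (h : G.Adj a b) (he : s(a, b) ∉ M) :
    IsAltCycle G M (insert s(a, b) r.edges.toFinset) :=
  ⟨a, Walk.cons h r, (Walk.cons_isCycle_iff r h).2 ⟨hr, hM.notMem_edges hr he⟩, List.toFinset_cons,
    hM.altList_cons_cyclic he⟩

theorem IsAltCycle.hasZeroSkip_of_chord (hC : IsAltCycle G M C) {s : G.Walk a b} (hs : s.IsPath)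
    (hsub : s.edges.toFinset ⊆ C) (hodd : Odd s.length) (hlen : 1 < s.length)
    (hhead : ∀ e, s.edges.head? = some e → e ∉ M) (h : G.Adj a b) (he : s(a, b) ∉ M)
    (hw : wt red M s(a, b) = wSum red M s.edges.toFinset) :
    HasZeroSkip G red M C s.edges.toFinset := by
  have hnil : ¬s.Nil := by grind
  obtain ⟨r, hcyc, rfl, halt⟩ := hC.exists_tracesAltCycle_append hs.isTrail hnil hsub
  rw [Walk.edges_append] at halt
  have hr : IsMatchingEnded M r.edges := .of_altList_append halt (by simpa using hodd) hhead
  have hes : s(a, b) ∉ s.edges := fun hmem ↦ hlen.ne' (hs.length_eq_one_of_mem_edges hmem)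
  have hpath : r.IsPath := hcyc.isPath_of_append_right hnil
  have hnodup : (s.edges ++ r.edges).Nodup := by simpa using hcyc.edges_nodup
  have her : s(a, b) ∉ r.edges := hr.notMem_edges hpath he
  rw [Walk.edges_append, List.toFinset_append]
  have hdisj : Disjoint s.edges.toFinset r.edges.toFinset := by
    rw [List.disjoint_toFinset_iff_disjoint]
    exact List.disjoint_of_nodup_append hnodup
  refine ⟨s(a, b), insert s(a, b) r.edges.toFinset, h, ?_,
    hr.isAltCycle_insert hpath h he, mem_insert_self .., ?_, ?_, ?_, ?_⟩
  · simp [hes, her]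
  · grind
  · rw [card_insert_of_notMem (by simpa), card_union_of_disjoint hdisj,
      List.toFinset_card_of_nodup hs.isTrail.edges_nodup, Walk.length_edges]
    lia
  · rw [wSum, wSum, sum_insert (by simpa), sum_union hdisj, hw, wSum]
  · grind

end Closing

section Segments

open SimpleGraph

variable {V : Type*} {G : SimpleGraph V} {u v : V} (p : G.Walk u v) {m n : ℕ}

/-- The part of a walk from its `m`-th to its `n`-th vertex. -/
def walkSegment (hmn : m ≤ n) : G.Walk (p.getVert m) (p.getVert n) :=
  ((p.drop m).take (n - m)).copy rfl (by rw [Walk.drop_getVert, Nat.add_sub_cancel' hmn])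

theorem edges_walkSegment (hmn : m ≤ n) :
    (walkSegment p hmn).edges = (p.edges.drop m).take (n - m) := by
  rw [walkSegment, Walk.edges_copy, Walk.edges_take, Walk.edges_drop]

theorem length_walkSegment (hmn : m ≤ n) (hn : n ≤ p.length) :
    (walkSegment p hmn).length = n - m := by
  rw [← Walk.length_edges, edges_walkSegment, List.length_take, List.length_drop, Walk.length_edges]
  lia

theorem edges_walkSegment_subset (hmn : m ≤ n) : (walkSegment p hmn).edges ⊆ p.edges := by
  rw [edges_walkSegment]
  exact fun e he ↦ List.mem_of_mem_drop (List.mem_of_mem_take he)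

theorem isPath_walkSegment {p : G.Walk u v} (hp : p.IsPath) (hmn : m ≤ n) :
    (walkSegment p hmn).IsPath :=
  (Walk.isPath_copy ..).2 ((hp.drop m).take _)

theorem exists_getVert_eq_of_mem_support_walkSegment (hmn : m ≤ n) {x : V}
    (hx : x ∈ (walkSegment p hmn).support) : ∃ t, m ≤ t ∧ t ≤ n ∧ p.getVert t = x := by
  rw [walkSegment, Walk.support_copy, Walk.mem_support_iff_exists_getVert] at hx
  obtain ⟨t, rfl, -⟩ := hx
  exact ⟨m + min (n - m) t, by lia, by lia, by rw [Walk.take_getVert, Walk.drop_getVert]⟩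

theorem disjoint_support_walkSegment {p : G.Walk u v} (hp : p.IsPath) {m' n' : ℕ} (hmn : m ≤ n)
    (hmn' : m' ≤ n') (hlt : n < m') (hn' : n' ≤ p.length) :
    (walkSegment p hmn).support.Disjoint (walkSegment p hmn').support := by
  intro x hx hx'
  obtain ⟨t, -, ht, rfl⟩ := exists_getVert_eq_of_mem_support_walkSegment p hmn hx
  obtain ⟨t', ht', htn', heq⟩ := exists_getVert_eq_of_mem_support_walkSegment p hmn' hx'
  have := hp.getVert_injOn (by grind) (by grind) heq
  lia

end Segments

section BipartiteIndependence

variable {V : Type*} {G : SimpleGraph V} {side : V → Bool} {n : ℕ}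

/-- Any `n` vertices on one side of the bipartition and `n` vertices on the other side are joined by
an edge. This says `β(G) < n`, without `β(G)` having to exist as a natural number. -/
def JoinsLargeSets (G : SimpleGraph V) (side : V → Bool) (n : ℕ) : Prop :=
  ∀ S T : Finset V, #S = n → #T = n → (∀ x ∈ S, ∀ y ∈ T, side x ≠ side y) →
    ∃ x ∈ S, ∃ y ∈ T, G.Adj x y

theorem le_bipIndepNum [Finite V] [DecidableEq V] {s : Finset V}
    (hs : (s : Set V).Pairwise fun x y ↦ ¬G.Adj x y) (htrue : #{w ∈ s | side w = true} = n)
    (hfalse : #{w ∈ s | side w = false} = n) : n ≤ bipIndepNum G side := by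
  refine le_csSup ⟨Nat.card V, ?_⟩ ⟨s, hs, htrue, hfalse⟩
  rintro _ ⟨t, -, rfl, -⟩
  have := Fintype.ofFinite V
  rw [Nat.card_eq_fintype_card]
  exact card_le_univ _

theorem joinsLargeSets_of_bipIndepNum_lt [Finite V] [DecidableEq V]
    (hbip : ∀ x y, G.Adj x y → side x ≠ side y) (hn : bipIndepNum G side < n) :
    JoinsLargeSets G side n := by
  intro S T hS hT hST
  by_contra! hnot
  obtain ⟨x₀, hx₀⟩ : S.Nonempty := card_pos.1 (by lia)
  obtain ⟨y₀, hy₀⟩ : T.Nonempty := card_pos.1 (by lia)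
  have hSside (x) (hx : x ∈ S) : side x = !side y₀ := Bool.eq_not.2 (hST x hx y₀ hy₀)
  have hTside (y) (hy : y ∈ T) : side y = side y₀ :=
    Bool.not_inj ((Bool.eq_not.2 (hST x₀ hx₀ y hy)).symm.trans (hSside x₀ hx₀))
  have hindep : ((S ∪ T : Finset V) : Set V).Pairwise fun x y ↦ ¬G.Adj x y := by
    intro x hx y hy _ hxy
    have := hbip x y hxy
    have := hxy.symm
    grind
  have hfilter (b : Bool) : #{w ∈ S ∪ T | side w = b} = n := by
    rcases Bool.eq_or_eq_not b (side y₀) with rfl | rfl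
    · rw [← hT]; congr 1; grind
    · rw [← hS]; congr 1; grind
  exact hn.not_ge (le_bipIndepNum hindep (hfilter true) (hfilter false))

variable {u v : V} {p : G.Walk u v}

theorem side_getVert_ne (hbip : ∀ x y, G.Adj x y → side x ≠ side y) {i j : ℕ} (hi : i ≤ p.length)
    (hj : j ≤ p.length) (hodd : Odd (i + j)) : side (p.getVert i) ≠ side (p.getVert j) := by
  let c : G.Coloring Bool := SimpleGraph.Coloring.mk side fun h ↦ hbip _ _ h
  have parity {t : ℕ} (ht : t ≤ p.length) : Odd t ↔ c u = !c (p.getVert t) := by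
    simpa [ht] using c.odd_length_iff_not_congr (p.take t)
  have := parity hi
  have := parity hj
  change c (p.getVert i) ≠ c (p.getVert j)
  grind

theorem JoinsLargeSets.exists_adj_getVert (hG : JoinsLargeSets G side n)
    (hbip : ∀ x y, G.Adj x y → side x ≠ side y) (hp : p.IsPath) {i j : ℕ} (hodd : Odd (i + j))
    (hi : i + 2 * n ≤ p.length + 2) (hj : j + 2 * n ≤ p.length + 2) :
    ∃ s < n, ∃ t < n, G.Adj (p.getVert (i + 2 * s)) (p.getVert (j + 2 * t)) := by
  classical
  have card_image {i : ℕ} (hi : i + 2 * n ≤ p.length + 2) :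
      #((range n).image fun s ↦ p.getVert (i + 2 * s)) = n := by
    rw [card_image_of_injOn, card_range]
    intro s hs t ht heq
    have := hp.getVert_injOn (by grind) (by grind) heq
    lia
  obtain ⟨x, hx, y, hy, hxy⟩ := hG _ _ (card_image hi) (card_image hj) (by
    simp only [mem_image, mem_range]
    rintro _ ⟨s, hs, rfl⟩ _ ⟨t, ht, rfl⟩
    exact side_getVert_ne hbip (by lia) (by lia) (by grind))
  simp only [mem_image, mem_range] at hx hy
  obtain ⟨s, hs, rfl⟩ := hx
  obtain ⟨t, ht, rfl⟩ := hy
  exact ⟨s, hs, t, ht, hxy⟩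

/-- The path is cut into four consecutive blocks of `2 * n` vertices: the two inner blocks give a
forward chord, the two outer ones a backward chord. -/
theorem JoinsLargeSets.exists_nested_chords (hG : JoinsLargeSets G side n)
    (hbip : ∀ x y, G.Adj x y → side x ≠ side y) (hp : p.IsPath) (hlen : 8 * n ≤ p.length + 2) :
    ∃ k i j l, k < i ∧ i + 1 < j ∧ j < l ∧ l ≤ p.length ∧ Odd k ∧ Even i ∧ Odd j ∧ Even l ∧
      G.Adj (p.getVert i) (p.getVert j) ∧ G.Adj (p.getVert l) (p.getVert k) := by
  obtain ⟨s, hs, t, ht, hin⟩ := hG.exists_adj_getVert hbip hp (i := 2 * n) (j := 4 * n + 1)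
    (by grind) (by lia) (by lia)
  obtain ⟨s', hs', t', ht', hout⟩ := hG.exists_adj_getVert hbip hp (i := 6 * n) (j := 1)
    (by grind) (by lia) (by lia)
  exact ⟨1 + 2 * t', 2 * n + 2 * s, 4 * n + 1 + 2 * t, 6 * n + 2 * s', by lia, by lia, by lia,
    by lia, by grind, by grind, by grind, by grind, hin, hout⟩

end BipartiteIndependence

section Chords

open SimpleGraph

variable {V : Type*} {G : SimpleGraph V} {M : Finset (Sym2 V)} {u v : V} {p : G.Walk u v}
  {i j k m n l : ℕ}

/-- A matching given as a set of edges: no vertex lies on two of its edges. -/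
def IsEdgeMatching (M : Finset (Sym2 V)) : Prop :=
  ∀ e ∈ M, ∀ f ∈ M, ∀ x, x ∈ e → x ∈ f → e = f

theorem IsPM.isEdgeMatching [DecidableEq V] (hM : IsPM G M) : IsEdgeMatching M :=
  fun _ he _ hf x hxe hxf ↦ (hM.2 x).unique ⟨he, hxe⟩ ⟨hf, hxf⟩

/-- The edge list of an alternating path starting with a non-matching edge, encoded by positions:
matching edges sit at the odd positions. -/
def IsMatchingAtOdd (M : Finset (Sym2 V)) (l : List (Sym2 V)) : Prop :=
  ∀ i (hi : i < l.length), l[i] ∈ M ↔ Odd i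

theorem IsMatchingAtOdd.chord_notMem (hl : IsMatchingAtOdd M p.edges) (hM : IsEdgeMatching M)
    (hp : p.IsPath) (hj : Odd j) (hjlen : j < p.length) (hi : i ≤ p.length) (hij : i ≠ j + 1) :
    s(p.getVert i, p.getVert j) ∉ M := by
  intro he
  have hf := (hl j (by simpa)).2 hj
  rw [Walk.getElem_edges] at hf
  have heq := hM _ he _ hf (p.getVert j) (Sym2.mem_mk_right ..) (Sym2.mem_mk_left ..)
  rw [Sym2.eq_swap, Sym2.congr_right] at heq
  exact hij (hp.getVert_injOn hi hjlen heq)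

theorem IsMatchingAtOdd.isMatchingEnded_walkSegment (hl : IsMatchingAtOdd M p.edges) (hm : Odd m)
    (hn : Even n) (hmn : m ≤ n) (hnlen : n ≤ p.length) :
    IsMatchingEnded M (walkSegment p hmn).edges where
  odd_length := by
    rw [Walk.length_edges, length_walkSegment p hmn hnlen]
    grind
  getElem_mem_iff t ht := by
    simp only [edges_walkSegment, List.getElem_take, List.getElem_drop]
    rw [hl]
    grind

theorem IsMatchingAtOdd.head_walkSegment_notMem (hl : IsMatchingAtOdd M p.edges) (hm : Even m)
    (hmn : m ≤ n) (e : Sym2 V) (he : (walkSegment p hmn).edges.head? = some e) : e ∉ M := by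
  simp only [edges_walkSegment, List.head?_take, List.head?_drop] at he
  grind [IsMatchingAtOdd]

variable [DecidableEq V] {C : Finset (Sym2 V)} {red : Sym2 V → Bool}

theorem IsMatchingAtOdd.isAltCycle_nested_chords (hl : IsMatchingAtOdd M p.edges)
    (hM : IsEdgeMatching M) (hp : p.IsPath) (hki : k < i) (hij : i < j) (hjl : j < l)
    (hlen : l ≤ p.length) (hk : Odd k) (hi : Even i) (hj : Odd j) (hl' : Even l)
    (hin : G.Adj (p.getVert i) (p.getVert j)) (hout : G.Adj (p.getVert l) (p.getVert k)) :
    ∃ F ⊆ p.edges.toFinset, IsAltCycle G M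
      (insert s(p.getVert l, p.getVert k) (insert s(p.getVert i, p.getVert j) F)) := by
  let r₁ := walkSegment p hki.le
  let r₂ := walkSegment p hjl.le
  have hr : (r₁.append (Walk.cons hin r₂)).IsPath :=
    isPath_append_cons (isPath_walkSegment hp _) (isPath_walkSegment hp _)
      (disjoint_support_walkSegment hp _ _ hij hlen) hin
  have hends : IsMatchingEnded M (r₁.append (Walk.cons hin r₂)).edges := by
    rw [Walk.edges_append, Walk.edges_cons]
    exact (hl.isMatchingEnded_walkSegment hk hi _ (by lia)).append_cons
      (hl.isMatchingEnded_walkSegment hj hl' _ hlen)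
      (hl.chord_notMem hM hp hj (by lia) (by lia) (by lia))
  refine ⟨r₁.edges.toFinset ∪ r₂.edges.toFinset, union_subset ?_ ?_, ?_⟩
  · exact fun e he ↦ List.mem_toFinset.2 (edges_walkSegment_subset p _ (List.mem_toFinset.1 he))
  · exact fun e he ↦ List.mem_toFinset.2 (edges_walkSegment_subset p _ (List.mem_toFinset.1 he))
  · have hout_notMem := hl.chord_notMem hM hp hk (by lia) hlen (by lia)
    convert hends.isAltCycle_insert hr hout hout_notMem using 2
    simp

/-- A blue forward chord would replace an all-blue part of `C` without changing the weight. -/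
theorem IsMatchingAtOdd.red_chord (hl : IsMatchingAtOdd M p.edges) (hM : IsEdgeMatching M)
    (hC : IsAltCycle G M C) (hp : p.IsPath) (hPC : p.edges.toFinset ⊆ C)
    (hblue : ∀ e ∈ p.edges, red e = false) (hskip : ¬HasZeroSkip G red M C p.edges.toFinset)
    (hij : i + 1 < j) (hjlen : j < p.length) (hi : Even i) (hj : Odd j)
    (hin : G.Adj (p.getVert i) (p.getVert j)) : red s(p.getVert i, p.getVert j) = true := by
  by_contra hred
  have hle : i ≤ j := by lia
  have hsub : (walkSegment p hle).edges.toFinset ⊆ p.edges.toFinset := fun e he ↦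
    List.mem_toFinset.2 (edges_walkSegment_subset p hle (List.mem_toFinset.1 he))
  have hlength := length_walkSegment p hle hjlen.le
  have hw : wSum red M (walkSegment p hle).edges.toFinset = 0 :=
    sum_eq_zero fun e he ↦ by simp [wt, hblue e (List.mem_toFinset.1 (hsub he))]
  exact hskip <| .mono hsub <| hC.hasZeroSkip_of_chord (isPath_walkSegment hp hle)
    (hsub.trans hPC) (by grind) (by grind) (hl.head_walkSegment_notMem hi hle) hin
    (hl.chord_notMem hM hp hj hjlen (by lia) (by lia)) (by simp [hw, wt, hred])

theorem IsMatchingAtOdd.hasSmallRedCycle {side : V → Bool} (hl : IsMatchingAtOdd M p.edges)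
    (hM : IsEdgeMatching M) (hC : IsAltCycle G M C) (hp : p.IsPath) (hPC : p.edges.toFinset ⊆ C)
    (hblue : ∀ e ∈ p.edges, red e = false) (hskip : ¬HasZeroSkip G red M C p.edges.toFinset)
    (hG : JoinsLargeSets G side n) (hbip : ∀ x y, G.Adj x y → side x ≠ side y)
    (hlen : 8 * n ≤ p.length + 2) : HasSmallRedCycle G red M C p.edges := by
  obtain ⟨k, i, j, l, hki, hij, hjl, hllen, hk, hi, hj, hl', hin, hout⟩ :=
    hG.exists_nested_chords hbip hp hlen
  have hred := hl.red_chord hM hC hp hPC hblue hskip hij (by lia) hi hj hin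
  obtain ⟨F, hF, hC'⟩ :=
    hl.isAltCycle_nested_chords hM hp hki (by lia) hjl hllen hk hi hj hl' hin hout
  have he₁ : s(p.getVert i, p.getVert j) ∉ M :=
    hl.chord_notMem hM hp hj (by lia) (by lia) (by lia)
  have he₂ : s(p.getVert l, p.getVert k) ∉ M := hl.chord_notMem hM hp hk (by lia) hllen (by lia)
  have hnil : ¬p.Nil := by grind
  have endpoint_mem {a : V} {s t : ℕ} (ha : a ∈ s(p.getVert s, p.getVert t)) :
      ∃ f ∈ p.edges, a ∈ f := by
    rw [← Walk.mem_support_iff_exists_mem_edges_of_not_nil hnil]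
    rcases Sym2.mem_iff.1 ha with rfl | rfl <;> exact p.getVert_mem_support _
  have hne : s(p.getVert i, p.getVert j) ≠ s(p.getVert l, p.getVert k) := by
    intro heq
    rcases Sym2.eq_iff.1 heq with ⟨h, -⟩ | ⟨h, -⟩ <;>
    · have := hp.getVert_injOn (by grind) (by grind) h
      lia
  have hFblue (e) (he : e ∈ F) : red e = false := hblue e (List.mem_toFinset.1 (hF he))
  have hcount := redCount_eq_wSum (M := M) (red := red)
    (F := insert s(p.getVert l, p.getVert k) (insert s(p.getVert i, p.getVert j) F)) (by grind)
  refine ⟨_, _, _, hin, hout, hne, fun a ↦ endpoint_mem, fun a ↦ endpoint_mem, .inl hred, hC',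
    by simp, by simp, ?_, ?_, ?_, hcount⟩
  · exact fun e he ↦ hPC (hF (by grind))
  · rw [← hcount]
    exact_mod_cast redCount_pos (by simp) hred
  · rw [← hcount]
    exact_mod_cast redCount_insert_insert_le_two hFblue _ _

end Chords

theorem biskip_or_small_cycle_general {V : Type*} [DecidableEq V] (G : SimpleGraph V)
    (red : Sym2 V → Bool) (side : V → Bool) (hbip : ∀ x y : V, G.Adj x y → side x ≠ side y)
    (M C : Finset (Sym2 V)) {n : ℕ} (hG : JoinsLargeSets G side n) (hM : IsEdgeMatching M)
    (hC : IsAltCycle G M C) {u v : V} (p : G.Walk u v) (hpath : p.IsPath)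
    (halt : altList M p.edges) (hPC : p.edges.toFinset ⊆ C) (hlen : 8 * n ≤ p.length + 2)
    (hstart : ∀ e : Sym2 V, p.edges.head? = some e → e ∉ M)
    (hskip : ¬HasZeroSkip G red M C p.edges.toFinset) :
    ((∀ e ∈ p.edges, red e = false) → HasSmallRedCycle G red M C p.edges) ∧
    ((∀ e ∈ p.edges, red e = true) → HasSmallBlueCycle G red M C p.edges) := by
  have hl : IsMatchingAtOdd M p.edges := fun i hi ↦ halt.getElem_mem_iff_odd hstart i hi
  refine ⟨fun hblue ↦ hl.hasSmallRedCycle hM hC hpath hPC hblue hskip hG hbip hlen, fun hred ↦ ?_⟩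
  have hred_not (e) (he : e ∈ p.edges) : (!red e) = false := by simp [hred e he]
  have hskip_not : ¬HasZeroSkip G (fun e ↦ !red e) M C p.edges.toFinset :=
    fun h ↦ hskip (h.of_red_not hC)
  exact (hl.hasSmallRedCycle hM hC hpath hPC hred_not hskip_not hG hbip hlen).hasSmallBlueCycle

/-- Bipartite lemma "biskip or cycle": in a bipartite graph, let `C` be an `M`-alternating
cycle and `P ⊆ C` a monochromatic `M`-alternating path of length at least `6(2β+2)²`
starting with a non-matching edge and containing no 0-biskip. If `P` is blue, there are two
chords `e1, e2` with endpoints on `P`, at least one red, closing up with parts of `C` into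
an `M`-alternating cycle `C'` with `0 < w_M(C') ≤ 2` whose number of red edges equals
`w_M(C')`; if `P` is red, the symmetric conclusion holds. -/
theorem biskip_or_small_cycle
    {V : Type*} [Fintype V] [DecidableEq V] (G : SimpleGraph V) (red : Sym2 V → Bool)
    (side : V → Bool) (hbip : ∀ x y : V, G.Adj x y → side x ≠ side y)
    (M C : Finset (Sym2 V)) (hM : IsPM G M) (hC : IsAltCycle G M C)
    (u v : V) (p : G.Walk u v) (hpath : p.IsPath) (halt : altList M p.edges)
    (hPC : p.edges.toFinset ⊆ C)
    (hlen : 6 * (2 * bipIndepNum G side + 2) ^ 2 ≤ p.length)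
    (hstart : ∀ e : Sym2 V, p.edges.head? = some e → e ∉ M)
    (hnobiskip : ¬ ∃ (e1 e2 : Sym2 V) (C1 C2 : Finset (Sym2 V)),
      IsBiskip G red M C e1 e2 C1 C2 ∧
      wSum red M C1 + wSum red M C2 - wSum red M C = 0 ∧
      C \ (C1 ∪ C2) ⊆ p.edges.toFinset) :
    ((∀ e ∈ p.edges, red e = false) →
      ∃ (e1 e2 : Sym2 V) (C' : Finset (Sym2 V)),
        e1 ∈ G.edgeSet ∧ e2 ∈ G.edgeSet ∧ e1 ≠ e2 ∧
        (∀ a : V, a ∈ e1 → ∃ f ∈ p.edges, a ∈ f) ∧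
        (∀ a : V, a ∈ e2 → ∃ f ∈ p.edges, a ∈ f) ∧
        (red e1 = true ∨ red e2 = true) ∧
        IsAltCycle G M C' ∧ e1 ∈ C' ∧ e2 ∈ C' ∧ C' \ {e1, e2} ⊆ C ∧
        0 < wSum red M C' ∧ wSum red M C' ≤ 2 ∧
        (redCount red C' : ℤ) = wSum red M C') ∧
    ((∀ e ∈ p.edges, red e = true) →
      ∃ (e1 e2 : Sym2 V) (C' : Finset (Sym2 V)),
        e1 ∈ G.edgeSet ∧ e2 ∈ G.edgeSet ∧ e1 ≠ e2 ∧
        (∀ a : V, a ∈ e1 → ∃ f ∈ p.edges, a ∈ f) ∧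
        (∀ a : V, a ∈ e2 → ∃ f ∈ p.edges, a ∈ f) ∧
        (red e1 = false ∨ red e2 = false) ∧
        IsAltCycle G M C' ∧ e1 ∈ C' ∧ e2 ∈ C' ∧ C' \ {e1, e2} ⊆ C ∧
        -2 ≤ wSum red M C' ∧ wSum red M C' < 0 ∧
        (blueCount red C' : ℤ) = |wSum red M C'|) := by
  have hlen' : 8 * (bipIndepNum G side + 1) ≤ p.length + 2 := by nlinarith
  exact biskip_or_small_cycle_general G red side hbip M C
    (joinsLargeSets_of_bipIndepNum_lt hbip (Nat.lt_succ_self _)) hM.isEdgeMatching hC p hpath halt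
    hPC hlen' hstart fun h ↦ hnobiskip h.exists_isBiskip
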